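/- Assume m¹ is a reversible measure for q, and suppose F ⊂ E* is (m²,Q)-invariant. Then: for Lebesgue-a.e. v ∈ (−csc γ, csc γ), (i) q(x, [F⁺]_v) = 1 for m¹-a.e. x ∈ −[F⁻]_v and (ii) q(x, −[F⁻]_v) = 1 for m¹-a.e. x ∈ [F⁺]_v; and for Lebesgue-a.e. u ∈ (−csc γ, csc γ), (iii) q(x, [F⁻]^u) = 1 for m¹-a.e. x ∈ −[F⁺]^u and (iv) q(x, −[F⁺]^u) = 1 for m¹-a.e. x ∈ [F⁻]^u. -/

import Mathlib

open MeasureTheory ProbabilityTheory Set Pointwise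
open scoped ENNReal

noncomputable section

/-- The increasing affine map from `(-1,1)` onto the chord `E_u`. -/
def ellMap (γ u x : ℝ) : ℝ := -u * Real.cos γ + x * Real.sqrt (1 - u ^ 2 * Real.sin γ ^ 2)

/-- The inverse of `ellMap γ u`. -/
def ellInv (γ u y : ℝ) : ℝ := (y + u * Real.cos γ) / Real.sqrt (1 - u ^ 2 * Real.sin γ ^ 2)

/-- The open elliptical region `E`. -/
def Eset (γ : ℝ) : Set (ℝ × ℝ) :=
  {p | p.1 ^ 2 + 2 * Real.cos γ * p.1 * p.2 + p.2 ^ 2 < 1}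

/-- The state space `E* = E × {−1,1}`, realized inside `ℝ × ℝ × ℝ`. -/
def EstarSet (γ : ℝ) : Set (ℝ × ℝ × ℝ) :=
  {w | (w.1, w.2.1) ∈ Eset γ ∧ (w.2.2 = 1 ∨ w.2.2 = -1)}

/-- Uniform probability measure on `(-1,1)`. -/
def m1 : Measure ℝ := (2 : ℝ≥0∞)⁻¹ • volume.restrict (Ioo (-1 : ℝ) 1)

/-- The probability measure `m²` on `E*`: normalized Lebesgue measure on `E` times
uniform measure on `{−1,1}`. -/
def m2 (γ : ℝ) : Measure (ℝ × ℝ × ℝ) :=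
  ((((volume (Eset γ))⁻¹ • volume.restrict (Eset γ)).prod
      ((2 : ℝ≥0∞)⁻¹ • (Measure.dirac (1 : ℝ) + Measure.dirac (-1 : ℝ)))).map
    fun p => (p.1.1, p.1.2, p.2))

/-- `q` is a Markov kernel on `(-1,1)`. -/
def IsMarkovOnInterval (q : Kernel ℝ ℝ) : Prop :=
  IsMarkovKernel q ∧ ∀ x ∈ Ioo (-1 : ℝ) 1, q x (Ioo (-1 : ℝ) 1) = 1

/-- The kernel `Q` of the alternating random walk, as a measure-valued function on the
state space. -/
def Qfun (γ : ℝ) (q : Kernel ℝ ℝ) : ℝ × ℝ × ℝ → Measure (ℝ × ℝ × ℝ) := fun w =>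
  if w.2.2 = -1 then
    Measure.map (fun x => (ellMap γ w.2.1 x, w.2.1, (1 : ℝ))) (q (-ellInv γ w.2.1 w.1))
  else
    Measure.map (fun x => (w.1, ellMap γ w.1 x, (-1 : ℝ))) (q (-ellInv γ w.1 w.2.1))

/-- The kernel `Q†`. -/
def Qdag (γ : ℝ) (q : Kernel ℝ ℝ) : ℝ × ℝ × ℝ → Measure (ℝ × ℝ × ℝ) := fun w =>
  if w.2.2 = 1 then
    Measure.map (fun x => (ellMap γ w.2.1 x, w.2.1, (-1 : ℝ)))
      ((q (ellInv γ w.2.1 w.1)).map (fun y => -y))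
  else
    Measure.map (fun x => (w.1, ellMap γ w.1 x, (1 : ℝ)))
      ((q (ellInv γ w.1 w.2.1)).map (fun y => -y))

/-- Bounded continuous real-valued functions on a subset `S`. -/
def BddCtsOn {X : Type*} [TopologicalSpace X] (S : Set X) (f : X → ℝ) : Prop :=
  ContinuousOn f S ∧ ∃ C, ∀ x ∈ S, |f x| ≤ C

/-- `m¹` is a reversible measure for `q`. -/
def Reversible1 (q : Kernel ℝ ℝ) : Prop :=
  ∀ j k : ℝ → ℝ, BddCtsOn (Ioo (-1 : ℝ) 1) j → BddCtsOn (Ioo (-1 : ℝ) 1) k →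
    ∫ x, k x * ∫ y, j y ∂(q x) ∂m1 = ∫ x, j x * ∫ y, k y ∂(q x) ∂m1

/-- The `†`-operation on measure-valued functions on `(-1,1)`: `p†(x,A) := p(−x,−A)`. -/
def dag (p : ℝ → Measure ℝ) : ℝ → Measure ℝ := fun x => (p (-x)).map (fun y => -y)

/-- `m¹` is a `†`-reversible measure for `p`. -/
def DagReversible1 (p : ℝ → Measure ℝ) : Prop :=
  ∀ j k : ℝ → ℝ, BddCtsOn (Ioo (-1 : ℝ) 1) j → BddCtsOn (Ioo (-1 : ℝ) 1) k →
    ∫ x, k x * ∫ y, j y ∂(p x) ∂m1 = ∫ x, j x * ∫ y, k y ∂(dag p x) ∂m1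

/-- `m²` is a `†`-reversible measure for `Q`. -/
def DagReversible2 (γ : ℝ) (q : Kernel ℝ ℝ) : Prop :=
  ∀ f g : ℝ × ℝ × ℝ → ℝ, BddCtsOn (EstarSet γ) f → BddCtsOn (EstarSet γ) g →
    ∫ w, g w * ∫ w', f w' ∂(Qfun γ q w) ∂(m2 γ) =
      ∫ w, f w * ∫ w', g w' ∂(Qdag γ q w) ∂(m2 γ)

/-- `μ` is an invariant measure for the transition function `p`. -/
def KInvariantMeasure {S : Type*} [MeasurableSpace S] (μ : Measure S) (p : S → Measure S) :
    Prop :=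
  ∀ A : Set S, MeasurableSet A → ∫⁻ x, p x A ∂μ = μ A

/-- The set `A` is `(μ,p)`-invariant. -/
def KInvariantSet {S : Type*} [MeasurableSpace S] (μ : Measure S) (p : S → Measure S)
    (A : Set S) : Prop :=
  ∀ᵐ x ∂μ, x ∈ A → p x A = 1

/-- `μ` is an ergodic measure for the transition function `p`. -/
def KErgodicMeasure {S : Type*} [MeasurableSpace S] (μ : Measure S) (p : S → Measure S) :
    Prop :=
  KInvariantMeasure μ p ∧
    ∀ A : Set S, MeasurableSet A → KInvariantSet μ p A → μ A = 0 ∨ μ A = 1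

/-- The set `A` is `(μ,p)`-ergodic. -/
def KErgodicSet {S : Type*} [MeasurableSpace S] (μ : Measure S) (p : S → Measure S)
    (A : Set S) : Prop :=
  MeasurableSet A ∧ KInvariantSet μ p A ∧
    ∀ B : Set S, B ⊆ A → MeasurableSet B → KInvariantSet μ p B → μ B = 0 ∨ μ B = μ A

/-- `F⁺`: the slice of `F ⊆ E*` at `s = 1`. -/
def Fplus (F : Set (ℝ × ℝ × ℝ)) : Set (ℝ × ℝ) := {p | (p.1, p.2, (1 : ℝ)) ∈ F}

/-- `F⁻`: the slice of `F ⊆ E*` at `s = −1`. -/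
def Fminus (F : Set (ℝ × ℝ × ℝ)) : Set (ℝ × ℝ) := {p | (p.1, p.2, (-1 : ℝ)) ∈ F}

/-- `[G]^u ⊆ (−1,1)`. -/
def brU (γ : ℝ) (G : Set (ℝ × ℝ)) (u : ℝ) : Set ℝ :=
  {x | x ∈ Ioo (-1 : ℝ) 1 ∧ (u, ellMap γ u x) ∈ G}

/-- `[G]_v ⊆ (−1,1)`. -/
def brV (γ : ℝ) (G : Set (ℝ × ℝ)) (v : ℝ) : Set ℝ :=
  {x | x ∈ Ioo (-1 : ℝ) 1 ∧ (ellMap γ v x, v) ∈ G}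

/-- The map `T₀` on `E*`. -/
def T0 (γ : ℝ) (w : ℝ × ℝ × ℝ) : ℝ × ℝ × ℝ :=
  (-w.1 - 2 * w.2.1 * Real.cos γ, w.2.1, -w.2.2)

/-- The map `T₁` on `E*`. -/
def T1 (γ : ℝ) (w : ℝ × ℝ × ℝ) : ℝ × ℝ × ℝ :=
  (w.1, -w.2.1 - 2 * w.1 * Real.cos γ, -w.2.2)

/-- The linear map `U_γ` taking `E` to the unit disk. -/
def Ugamma (γ : ℝ) (p : ℝ × ℝ) : ℝ × ℝ := (p.1 + p.2 * Real.cos γ, p.2 * Real.sin γ)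

/-- `V(u,v,s) = s·|U_γ(u,v)|²`. -/
def Vfun (γ : ℝ) (w : ℝ × ℝ × ℝ) : ℝ :=
  w.2.2 * ((w.1 + w.2.1 * Real.cos γ) ^ 2 + (w.2.1 * Real.sin γ) ^ 2)

/-!
Disintegrate `E` along the chords `{v = const}`. Since `F` is invariant, the reflected kernel sends
almost every point of `F⁻` into `F⁺` along these chords; as `m¹` is reversible, hence invariant,
for `q`, almost every chord satisfies `m¹([F⁻]_v) ≤ m¹([F⁺]_v)`, so `|F⁻| ≤ |F⁺|`. The chords
`{u = const}` give `|F⁺| ≤ |F⁻|` in the same way. Both inequalities are therefore equalities on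
almost every chord, and between sets of equal finite measure reversibility allows a kernel that
sends almost every point of one into the other to be run backwards.
-/

section Reversible

variable {X : Type*} [MeasurableSpace X] {μ : Measure X} {κ : Kernel X X} {A B : Set X}

lemma isReversible_of_map_swap_compProd [SFinite μ] [IsSFiniteKernel κ]
    (h : (μ ⊗ₘ κ).map Prod.swap = μ ⊗ₘ κ) : κ.IsReversible μ := fun A B hA hB ↦
  calc ∫⁻ x in A, κ x B ∂μ
      = (μ ⊗ₘ κ) (A ×ˢ B) := (Measure.compProd_apply_prod hA hB).symm
    _ = ((μ ⊗ₘ κ).map Prod.swap) (A ×ˢ B) := by rw [h]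
    _ = (μ ⊗ₘ κ) (B ×ˢ A) := by
      rw [Measure.map_apply measurable_swap (hA.prod hB), preimage_swap_prod]
    _ = ∫⁻ x in B, κ x A ∂μ := Measure.compProd_apply_prod hB hA

lemma measurable_mul_boundedContinuous [TopologicalSpace X] [OpensMeasurableSpace X]
    (f g : BoundedContinuousFunction X ℝ) : Measurable fun p : X × X ↦ f p.1 * g p.2 :=
  (f.continuous.measurable.comp measurable_fst).mul (g.continuous.measurable.comp measurable_snd)

lemma integral_compProd_mul_boundedContinuous [TopologicalSpace X] [OpensMeasurableSpace X]
    [IsFiniteMeasure μ] [IsFiniteKernel κ] (f g : BoundedContinuousFunction X ℝ) :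
    ∫ p, f p.1 * g p.2 ∂(μ ⊗ₘ κ) = ∫ x, f x * ∫ y, g y ∂(κ x) ∂μ := by
  have hint : Integrable (fun p : X × X ↦ f p.1 * g p.2) (μ ⊗ₘ κ) := by
    refine Integrable.of_bound (C := ‖f‖ * ‖g‖) ?_ (.of_forall fun p ↦ ?_)
    · exact (measurable_mul_boundedContinuous f g).aestronglyMeasurable
    · rw [norm_mul]
      gcongr
      exacts [f.norm_coe_le_norm _, g.norm_coe_le_norm _]
  simp only [Measure.integral_compProd hint, integral_const_mul]

lemma isReversible_of_integral_boundedContinuous [TopologicalSpace X] [BorelSpace X]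
    [HasOuterApproxClosed X] [IsFiniteMeasure μ] [IsFiniteKernel κ]
    (h : ∀ f g : BoundedContinuousFunction X ℝ,
      ∫ x, f x * ∫ y, g y ∂(κ x) ∂μ = ∫ x, g x * ∫ y, f y ∂(κ x) ∂μ) :
    κ.IsReversible μ := by
  refine isReversible_of_map_swap_compProd
    (Measure.ext_of_integral_mul_boundedContinuousFunction fun f g ↦ ?_)
  calc ∫ p, f p.1 * g p.2 ∂((μ ⊗ₘ κ).map Prod.swap)
      = ∫ p, g p.1 * f p.2 ∂(μ ⊗ₘ κ) := by
        rw [integral_map measurable_swap.aemeasurable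
          (measurable_mul_boundedContinuous f g).aestronglyMeasurable]
        simp only [Prod.fst_swap, Prod.snd_swap, mul_comm]
    _ = ∫ p, f p.1 * g p.2 ∂(μ ⊗ₘ κ) := by
        simp only [integral_compProd_mul_boundedContinuous, h g f]

lemma measure_eq_setLIntegral_of_ae_eq_one (hκ : κ.IsReversible μ) (hA : MeasurableSet A)
    (hB : MeasurableSet B) (h : ∀ᵐ x ∂μ, x ∈ A → κ x B = 1) :
    μ A = ∫⁻ x in B, κ x A ∂μ := by
  rw [← hκ hA hB, setLIntegral_congr_fun_ae hA h, setLIntegral_one]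

lemma measure_le_of_ae_eq_one [IsMarkovKernel κ] (hκ : κ.IsReversible μ) (hA : MeasurableSet A)
    (hB : MeasurableSet B) (h : ∀ᵐ x ∂μ, x ∈ A → κ x B = 1) : μ A ≤ μ B :=
  calc μ A = ∫⁻ x in B, κ x A ∂μ := measure_eq_setLIntegral_of_ae_eq_one hκ hA hB h
    _ ≤ ∫⁻ _ in B, 1 ∂μ := lintegral_mono fun _ ↦ prob_le_one
    _ = μ B := setLIntegral_one B

lemma ae_eq_one_symm_of_measure_le [IsMarkovKernel κ] (hκ : κ.IsReversible μ)
    (hA : MeasurableSet A) (hB : MeasurableSet B) (h : ∀ᵐ x ∂μ, x ∈ A → κ x B = 1)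
    (hfin : μ A ≠ ∞) (hle : μ B ≤ μ A) : ∀ᵐ x ∂μ, x ∈ B → κ x A = 1 := by
  have hAB := measure_eq_setLIntegral_of_ae_eq_one hκ hA hB h
  rw [← ae_restrict_iff' hB]
  refine ae_eq_of_ae_le_of_lintegral_le (.of_forall fun x ↦ prob_le_one) (hAB ▸ hfin)
    aemeasurable_const ?_
  rwa [setLIntegral_one, ← hAB]

end Reversible

lemma ae_measure_section_eq_of_prod_le {α β : Type*} [MeasurableSpace α] [MeasurableSpace β]
    {μ : Measure α} {ν : Measure β} [SFinite ν] {s t : Set (α × β)} (hs : MeasurableSet s)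
    (ht : MeasurableSet t) (hle : ∀ᵐ a ∂μ, ν (Prod.mk a ⁻¹' s) ≤ ν (Prod.mk a ⁻¹' t))
    (hfin : μ.prod ν s ≠ ∞) (hts : μ.prod ν t ≤ μ.prod ν s) :
    ∀ᵐ a ∂μ, ν (Prod.mk a ⁻¹' s) = ν (Prod.mk a ⁻¹' t) := by
  rw [Measure.prod_apply hs] at hfin hts
  rw [Measure.prod_apply ht] at hts
  exact ae_eq_of_ae_le_of_lintegral_le hle hfin
    (measurable_measure_prodMk_left ht).aemeasurable hts

lemma volume_preimage_swap {α β : Type*} [MeasureSpace α] [MeasureSpace β]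
    [SFinite (volume : Measure α)] [SFinite (volume : Measure β)] (G : Set (α × β)) :
    volume (Prod.swap ⁻¹' G) = volume G :=
  (Measure.measurePreserving_swap (μ := volume) (ν := volume)).measure_preimage_equiv
    (f := MeasurableEquiv.prodComm) G

instance : IsFiniteMeasure m1 :=
  Measure.smul_finite _ (by simp)

instance : m1.IsNegInvariant where
  neg_eq_self := by
    have hIoo : -Ioo (-1 : ℝ) 1 = Ioo (-1) 1 := by simp
    have h := (Measure.measurePreserving_neg (volume : Measure ℝ)).restrict_preimage
      (measurableSet_Ioo (a := (-1 : ℝ)) (b := 1))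
    rw [Set.neg_preimage, hIoo] at h
    rw [Measure.neg, m1, Measure.map_smul, h.map_eq]

lemma m1_absolutelyContinuous : m1 ≪ volume :=
  Measure.smul_absolutelyContinuous.trans Measure.restrict_le_self.absolutelyContinuous

lemma m1_apply_of_subset {A : Set ℝ} (hA : A ⊆ Ioo (-1 : ℝ) 1) : m1 A = 2⁻¹ * volume A := by
  rw [m1, Measure.smul_apply, Measure.restrict_eq_self _ hA, smul_eq_mul]

lemma Reversible1.isReversible {q : Kernel ℝ ℝ} [IsFiniteKernel q] (h : Reversible1 q) :
    q.IsReversible m1 :=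
  isReversible_of_integral_boundedContinuous fun f g ↦
    h g f ⟨g.continuous.continuousOn, ‖g‖, fun x _ ↦ g.norm_coe_le_norm x⟩
      ⟨f.continuous.continuousOn, ‖f‖, fun x _ ↦ f.norm_coe_le_norm x⟩

section Ellipse

variable {γ u x : ℝ} {p : ℝ × ℝ} {G H : Set (ℝ × ℝ)}

/-- Half the length of the chord `E_u`. It is `0` when the line of abscissa `u` misses `E`, because
`Real.sqrt` vanishes on negative numbers. -/
def halfChord (γ u : ℝ) : ℝ := Real.sqrt (1 - u ^ 2 * Real.sin γ ^ 2)

lemma mem_Eset_iff_sq_lt :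
    p ∈ Eset γ ↔ (p.2 + p.1 * Real.cos γ) ^ 2 < 1 - p.1 ^ 2 * Real.sin γ ^ 2 := by
  rw [Real.sin_sq, Eset, mem_ofPred_eq, ← sub_pos, ← sub_pos (b := (_ + _) ^ 2)]
  ring_nf

lemma swap_mem_Eset_iff : p.swap ∈ Eset γ ↔ p ∈ Eset γ := by
  simp only [Eset, mem_ofPred_eq, Prod.fst_swap, Prod.snd_swap]
  ring_nf

lemma measurableSet_Eset : MeasurableSet (Eset γ) :=
  measurableSet_lt (by fun_prop) measurable_const

lemma halfChord_pos_of_mem_Eset (hp : p ∈ Eset γ) : 0 < halfChord γ p.1 :=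
  Real.sqrt_pos.2 ((sq_nonneg _).trans_lt (mem_Eset_iff_sq_lt.1 hp))

lemma abs_fst_lt_of_mem_Eset (hγ : Real.sin γ ≠ 0) (hp : p ∈ Eset γ) :
    |p.1| < |Real.sin γ|⁻¹ := by
  have hsq : (p.1 * Real.sin γ) ^ 2 < 1 := by
    rw [mul_pow]
    exact sub_pos.1 ((sq_nonneg _).trans_lt (mem_Eset_iff_sq_lt.1 hp))
  rwa [sq_lt_one_iff_abs_lt_one, abs_mul, ← lt_inv_mul_iff₀' (abs_pos.2 hγ), mul_one] at hsq

lemma volume_Eset_ne_top (hγ : Real.sin γ ≠ 0) : volume (Eset γ) ≠ ∞ := by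
  have hball : Eset γ ⊆ Metric.ball 0 |Real.sin γ|⁻¹ := fun p hp ↦
    mem_ball_zero_iff.2 (max_lt (abs_fst_lt_of_mem_Eset hγ hp)
      (abs_fst_lt_of_mem_Eset hγ (swap_mem_Eset_iff.2 hp)))
  exact ((measure_mono hball).trans_lt measure_ball_lt_top).ne

lemma mem_Ioo_of_ellMap_mem_Eset (h : (u, ellMap γ u x) ∈ Eset γ) : x ∈ Ioo (-1 : ℝ) 1 := by
  have hpos : 0 < halfChord γ u := halfChord_pos_of_mem_Eset h
  have hlt : (x * halfChord γ u) ^ 2 < halfChord γ u ^ 2 := by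
    rw [halfChord, Real.sq_sqrt (Real.sqrt_pos.1 hpos).le]
    convert mem_Eset_iff_sq_lt.1 h using 2
    simp only [ellMap, neg_mul]
    ring
  rw [mul_pow, mul_lt_iff_lt_one_left (by positivity), sq_lt_one_iff_abs_lt_one] at hlt
  exact abs_lt.1 hlt

@[fun_prop]
lemma measurable_ellMap : Measurable (ellMap γ u) := by
  unfold ellMap
  fun_prop

lemma ellInv_ellMap (hu : 0 < halfChord γ u) : ellInv γ u (ellMap γ u x) = x := by
  rw [ellInv, ellMap, neg_mul, neg_add_cancel_comm]
  exact mul_div_cancel_right₀ x hu.ne'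

lemma volume_preimage_ellMap (hu : 0 < halfChord γ u) (S : Set ℝ) :
    volume (ellMap γ u ⁻¹' S) = ENNReal.ofReal (halfChord γ u)⁻¹ * volume S := by
  change volume ((· * halfChord γ u) ⁻¹' ((-u * Real.cos γ + ·) ⁻¹' S)) = _
  rw [Real.volume_preimage_mul_right hu.ne', abs_of_pos (inv_pos.2 hu), measure_preimage_add]

lemma quasiMeasurePreserving_ellMap (hu : 0 < halfChord γ u) :
    Measure.QuasiMeasurePreserving (ellMap γ u) where
  measurable := measurable_ellMap
  absolutelyContinuous := .mk fun S hS hzero ↦ by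
    rw [Measure.map_apply measurable_ellMap hS, volume_preimage_ellMap hu, hzero, mul_zero]

lemma brU_eq_preimage (hG : G ⊆ Eset γ) : brU γ G u = ellMap γ u ⁻¹' (Prod.mk u ⁻¹' G) :=
  Subset.antisymm (fun _ hx ↦ hx.2) fun _ hx ↦ ⟨mem_Ioo_of_ellMap_mem_Eset (hG hx), hx⟩

lemma halfChord_pos_of_mem_brU (hG : G ⊆ Eset γ) (hx : x ∈ brU γ G u) : 0 < halfChord γ u :=
  halfChord_pos_of_mem_Eset (hG hx.2)

lemma measurableSet_brU (hG : MeasurableSet G) : MeasurableSet (brU γ G u) :=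
  measurableSet_Ioo.inter (measurable_ellMap (measurable_prodMk_left hG))

lemma brV_eq_brU_swap (G : Set (ℝ × ℝ)) (v : ℝ) : brV γ G v = brU γ (Prod.swap ⁻¹' G) v := rfl

lemma m1_brU (hu : 0 < halfChord γ u) (hG : G ⊆ Eset γ) :
    m1 (brU γ G u) =
      2⁻¹ * (ENNReal.ofReal (halfChord γ u)⁻¹ * volume (Prod.mk u ⁻¹' G)) := by
  rw [m1_apply_of_subset fun _ hx ↦ hx.1, brU_eq_preimage hG, volume_preimage_ellMap hu]

lemma m1_brU_le_iff (hu : 0 < halfChord γ u) (hG : G ⊆ Eset γ) (hH : H ⊆ Eset γ) :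
    m1 (brU γ G u) ≤ m1 (brU γ H u) ↔
      volume (Prod.mk u ⁻¹' G) ≤ volume (Prod.mk u ⁻¹' H) := by
  rw [m1_brU hu hG, m1_brU hu hH, ENNReal.mul_le_mul_iff_right (by simp) (by simp),
    ENNReal.mul_le_mul_iff_right (by simpa using hu) ENNReal.ofReal_ne_top]

end Ellipse

/-- From almost every point of `G`, the move of the walk that resamples the second coordinate by
the reflected kernel `q̂` lands in `H` almost surely. Moves of the first coordinate are covered by
exchanging coordinates in `G` and `H`. -/
def FlowsInto (γ : ℝ) (q : Kernel ℝ ℝ) (G H : Set (ℝ × ℝ)) : Prop :=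
  ∀ᵐ p : ℝ × ℝ, p ∈ G → q (-ellInv γ p.1 p.2) {x | (p.1, ellMap γ p.1 x) ∈ H} = 1

section FlowsInto

variable {γ : ℝ} {q : Kernel ℝ ℝ} {G H : Set (ℝ × ℝ)}

lemma FlowsInto.ae_brU (h : FlowsInto γ q G H) (hGE : G ⊆ Eset γ) (hHE : H ⊆ Eset γ) :
    ∀ᵐ u, ∀ᵐ x ∂m1, x ∈ -brU γ G u → q x (brU γ H u) = 1 := by
  filter_upwards [Measure.ae_ae_of_ae_prod h] with u hu
  rcases (brU γ G u).eq_empty_or_nonempty with hempty | ⟨y, hy⟩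
  · simp [hempty]
  have hpos := halfChord_pos_of_mem_brU hGE hy
  have hq : ∀ᵐ x, (u, ellMap γ u x) ∈ G → q (-x) (brU γ H u) = 1 := by
    filter_upwards [(quasiMeasurePreserving_ellMap hpos).ae hu] with x hx hxG
    rw [brU_eq_preimage hHE, ← ellInv_ellMap (x := x) hpos]
    exact hx hxG
  have hneg := (Measure.measurePreserving_neg volume).quasiMeasurePreserving.ae hq
  filter_upwards [m1_absolutelyContinuous.ae_le hneg] with x hx hxG
  simpa using hx hxG.2

variable [IsMarkovKernel q]

lemma FlowsInto.ae_volume_section_le (h : FlowsInto γ q G H) (hrev : q.IsReversible m1)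
    (hGE : G ⊆ Eset γ) (hHE : H ⊆ Eset γ) (hG : MeasurableSet G) (hH : MeasurableSet H) :
    ∀ᵐ u, volume (Prod.mk u ⁻¹' G) ≤ volume (Prod.mk u ⁻¹' H) := by
  filter_upwards [h.ae_brU hGE hHE] with u hu
  rcases (Prod.mk u ⁻¹' G).eq_empty_or_nonempty with hempty | ⟨y, hy⟩
  · simp [hempty]
  rw [← m1_brU_le_iff (halfChord_pos_of_mem_Eset (hGE hy)) hGE hHE, ← Measure.measure_neg m1]
  exact measure_le_of_ae_eq_one hrev (measurableSet_brU hG).neg (measurableSet_brU hH) hu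

lemma FlowsInto.volume_le (h : FlowsInto γ q G H) (hrev : q.IsReversible m1)
    (hGE : G ⊆ Eset γ) (hHE : H ⊆ Eset γ) (hG : MeasurableSet G) (hH : MeasurableSet H) :
    volume G ≤ volume H := by
  rw [Measure.volume_eq_prod, Measure.prod_apply hG, Measure.prod_apply hH]
  exact lintegral_mono_ae (h.ae_volume_section_le hrev hGE hHE hG hH)

lemma FlowsInto.ae_brU_and_symm (h : FlowsInto γ q G H) (hrev : q.IsReversible m1)
    (hGE : G ⊆ Eset γ) (hHE : H ⊆ Eset γ) (hG : MeasurableSet G) (hH : MeasurableSet H)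
    (hfin : volume G ≠ ∞) (hle : volume H ≤ volume G) :
    ∀ᵐ u, (∀ᵐ x ∂m1, x ∈ -brU γ G u → q x (brU γ H u) = 1) ∧
      (∀ᵐ x ∂m1, x ∈ brU γ H u → q x (-brU γ G u) = 1) := by
  have hsections := ae_measure_section_eq_of_prod_le hG hH
    (h.ae_volume_section_le hrev hGE hHE hG hH) hfin hle
  filter_upwards [h.ae_brU hGE hHE, hsections] with u hu heq
  refine ⟨hu, ?_⟩
  rcases (brU γ H u).eq_empty_or_nonempty with hempty | ⟨y, hy⟩
  · simp [hempty]
  refine ae_eq_one_symm_of_measure_le hrev (measurableSet_brU hG).neg (measurableSet_brU hH) hu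
    (measure_ne_top _ _) ?_
  rw [Measure.measure_neg, m1_brU_le_iff (halfChord_pos_of_mem_brU hHE hy) hHE hGE]
  exact heq.ge

end FlowsInto

section StateSpace

variable {γ : ℝ} {q : Kernel ℝ ℝ} {F : Set (ℝ × ℝ × ℝ)}

lemma ae_mem_Eset_of_ae_m2 (hE : volume (Eset γ) ≠ ∞) {P : ℝ × ℝ × ℝ → Prop}
    (h : ∀ᵐ w ∂(m2 γ), P w) :
    ∀ᵐ p : ℝ × ℝ, p ∈ Eset γ → P (p.1, p.2, 1) ∧ P (p.1, p.2, -1) := by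
  have hprod := Measure.ae_ae_of_ae_prod (ae_of_ae_map (by fun_prop) h)
  rw [Measure.ae_ennreal_smul_measure_iff (ENNReal.inv_ne_zero.2 hE),
    ae_restrict_iff' measurableSet_Eset] at hprod
  filter_upwards [hprod] with p hp hpE
  simpa [Measure.ae_ennreal_smul_measure_iff, ae_add_measure_iff, ae_dirac_eq] using hp hpE

lemma Qfun_one_apply (hF : MeasurableSet F) (u v : ℝ) :
    Qfun γ q (u, v, 1) F = q (-ellInv γ u v) {x | (u, ellMap γ u x) ∈ Fminus F} := by
  rw [Qfun, if_neg (by norm_num), Measure.map_apply (by fun_prop) hF]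
  rfl

lemma Qfun_neg_one_apply (hF : MeasurableSet F) (u v : ℝ) :
    Qfun γ q (u, v, -1) F = q (-ellInv γ v u) {x | (ellMap γ v x, v) ∈ Fplus F} := by
  rw [Qfun, if_pos rfl, Measure.map_apply (by fun_prop) hF]
  rfl

lemma flowsInto_Fplus_Fminus (hE : volume (Eset γ) ≠ ∞) (hsub : F ⊆ EstarSet γ)
    (hF : MeasurableSet F) (hinv : KInvariantSet (m2 γ) (Qfun γ q) F) :
    FlowsInto γ q (Fplus F) (Fminus F) := by
  filter_upwards [ae_mem_Eset_of_ae_m2 hE hinv] with p hp hpF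
  rw [← Qfun_one_apply hF]
  exact (hp (hsub hpF).1).1 hpF

lemma flowsInto_swap_Fminus_Fplus (hE : volume (Eset γ) ≠ ∞) (hsub : F ⊆ EstarSet γ)
    (hF : MeasurableSet F) (hinv : KInvariantSet (m2 γ) (Qfun γ q) F) :
    FlowsInto γ q (Prod.swap ⁻¹' Fminus F) (Prod.swap ⁻¹' Fplus F) := by
  have hswap := (Measure.measurePreserving_swap (μ := (volume : Measure ℝ))
    (ν := (volume : Measure ℝ))).quasiMeasurePreserving.ae (ae_mem_Eset_of_ae_m2 hE hinv)
  unfold FlowsInto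
  filter_upwards [hswap] with p hp hpF
  have h := (hp (hsub hpF).1).2 hpF
  rwa [Qfun_neg_one_apply hF] at h

end StateSpace

/-- the slices lemma for an `(m²,Q)`-invariant set `F`. -/
theorem slices_lemma (γ : ℝ) (hγ : γ ∈ Ioo 0 Real.pi)
    (q : Kernel ℝ ℝ) (hq : IsMarkovOnInterval q)
    (hrev : Reversible1 q)
    (F : Set (ℝ × ℝ × ℝ)) (hFsub : F ⊆ EstarSet γ) (hFm : MeasurableSet F)
    (hFinv : KInvariantSet (m2 γ) (Qfun γ q) F) :
    (∀ᵐ v ∂(volume.restrict (Ioo (-(Real.sin γ)⁻¹) (Real.sin γ)⁻¹)),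
      (∀ᵐ x ∂m1, x ∈ -brV γ (Fminus F) v → q x (brV γ (Fplus F) v) = 1) ∧
      (∀ᵐ x ∂m1, x ∈ brV γ (Fplus F) v → q x (-brV γ (Fminus F) v) = 1)) ∧
    (∀ᵐ u ∂(volume.restrict (Ioo (-(Real.sin γ)⁻¹) (Real.sin γ)⁻¹)),
      (∀ᵐ x ∂m1, x ∈ -brU γ (Fplus F) u → q x (brU γ (Fminus F) u) = 1) ∧
      (∀ᵐ x ∂m1, x ∈ brU γ (Fminus F) u → q x (-brU γ (Fplus F) u) = 1)) := by
  have := hq.1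
  have hE := volume_Eset_ne_top (Real.sin_pos_of_mem_Ioo hγ).ne'
  have hP : Fplus F ⊆ Eset γ := fun _ hp ↦ (hFsub hp).1
  have hM : Fminus F ⊆ Eset γ := fun _ hp ↦ (hFsub hp).1
  have hP' : Prod.swap ⁻¹' Fplus F ⊆ Eset γ := fun _ hp ↦ swap_mem_Eset_iff.1 (hP hp)
  have hM' : Prod.swap ⁻¹' Fminus F ⊆ Eset γ := fun _ hp ↦ swap_mem_Eset_iff.1 (hM hp)
  have hPm : MeasurableSet (Fplus F) := hFm.preimage (by fun_prop)
  have hMm : MeasurableSet (Fminus F) := hFm.preimage (by fun_prop)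
  have hPm' := measurable_swap hPm
  have hMm' := measurable_swap hMm
  have hU := flowsInto_Fplus_Fminus hE hFsub hFm hFinv
  have hV := flowsInto_swap_Fminus_Fplus hE hFsub hFm hFinv
  have hPM := hU.volume_le hrev.isReversible hP hM hPm hMm
  have hMP := hV.volume_le hrev.isReversible hM' hP' hMm' hPm'
  rw [volume_preimage_swap, volume_preimage_swap] at hMP
  have hvol : volume (Fplus F) = volume (Fminus F) := hPM.antisymm hMP
  simp only [brV_eq_brU_swap]
  constructor <;> apply ae_restrict_of_ae
  · exact hV.ae_brU_and_symm hrev.isReversible hM' hP' hMm' hPm' (measure_ne_top_of_subset hM' hE)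
      (by simp only [volume_preimage_swap, hvol, le_refl])
  · exact hU.ae_brU_and_symm hrev.isReversible hP hM hPm hMm (measure_ne_top_of_subset hP hE)
      hvol.ge
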